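/- Let p_1 < p_2 < ... < p_t be distinct primes and let α_1, ..., α_t ≥ 1 be integers. Then the set of congruences ∪_{1 ≤ i ≤ t} { 1 (mod p_i) } ∪ { p_i^{β-1} (mod p_i^β) : 1 ≤ i ≤ t, 2 ≤ β ≤ α_i } is good. -/

import Mathlib

/-- A congruence is a pair `(a, d)` representing `a (mod d)`, with residue `a : ℤ`
and modulus `d : ℕ`. Two congruences overlap if some integer satisfies both. -/
def Overlap (c₁ c₂ : ℤ × ℕ) : Prop :=
  ∃ x : ℤ, x ≡ c₁.1 [ZMOD (c₁.2 : ℤ)] ∧ x ≡ c₂.1 [ZMOD (c₂.2 : ℤ)]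

/-- A set of congruences is good if any two distinct overlapping congruences in it
have coprime moduli. -/
def IsGood (A : Set (ℤ × ℕ)) : Prop :=
  ∀ c₁ ∈ A, ∀ c₂ ∈ A, c₁ ≠ c₂ → Overlap c₁ c₂ → Nat.Coprime c₁.2 c₂.2

/-- A positive integer `n` is nice if there is a choice of residues `a d` for each
divisor `d > 1` of `n` such that `{a_d (mod d) : d ∣ n, d > 1}` is good. -/
def IsNice (n : ℕ) : Prop :=
  ∃ a : ℕ → ℤ, IsGood {c : ℤ × ℕ | ∃ d : ℕ, d ∣ n ∧ 1 < d ∧ c = (a d, d)}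

/-!
Every congruence in question has the form `p ^ k (mod p ^ (k + 1))`. For a fixed base `p > 1` these
are disjoint: if `b < c`, a common solution of the congruences with `k = b` and `k = c` would be
both `p ^ b` and `0` modulo `p ^ (b + 1)`. For coprime bases the moduli are coprime.
-/

theorem Overlap.symm {c₁ c₂ : ℤ × ℕ} (h : Overlap c₁ c₂) : Overlap c₂ c₁ :=
  let ⟨x, hx₁, hx₂⟩ := h
  ⟨x, hx₂, hx₁⟩

theorem Overlap.modEq_of_dvd {c₁ c₂ : ℤ × ℕ} (h : Overlap c₁ c₂) {d : ℕ} (h₁ : d ∣ c₁.2)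
    (h₂ : d ∣ c₂.2) : c₁.1 ≡ c₂.1 [ZMOD d] :=
  let ⟨_, hx₁, hx₂⟩ := h
  (hx₁.of_dvd (Int.natCast_dvd_natCast.2 h₁)).symm.trans
    (hx₂.of_dvd (Int.natCast_dvd_natCast.2 h₂))

theorem IsGood.mono {A B : Set (ℤ × ℕ)} (hB : IsGood B) (hAB : A ⊆ B) : IsGood A :=
  fun c₁ h₁ c₂ h₂ ↦ hB c₁ (hAB h₁) c₂ (hAB h₂)

theorem isGood_iUnion {ι : Type*} {A : ι → Set (ℤ × ℕ)} (hA : ∀ i, IsGood (A i))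
    (hcop : Pairwise fun i j ↦ ∀ c₁ ∈ A i, ∀ c₂ ∈ A j, c₁.2.Coprime c₂.2) :
    IsGood (⋃ i, A i) := by
  intro c₁ h₁ c₂ h₂ hne hov
  obtain ⟨i, hi⟩ := Set.mem_iUnion.1 h₁
  obtain ⟨j, hj⟩ := Set.mem_iUnion.1 h₂
  obtain rfl | hij := eq_or_ne i j
  · exact hA i c₁ hi c₂ hj hne hov
  · exact hcop hij c₁ hi c₂ hj

/-- The layer of congruences attached to a base `n`: all `n ^ k (mod n ^ (k + 1))` with `k ≥ 0`.
The exponent `k = 0` gives `1 (mod n)`, and `k = β - 1` gives `n ^ (β - 1) (mod n ^ β)`. -/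
def powerLayer (n : ℕ) : Set (ℤ × ℕ) :=
  Set.range fun k : ℕ ↦ ((n : ℤ) ^ k, n ^ (k + 1))

theorem one_mem_powerLayer (n : ℕ) : ((1 : ℤ), n) ∈ powerLayer n :=
  ⟨0, by simp⟩

theorem pow_pred_mem_powerLayer (n : ℕ) {β : ℕ} (hβ : 0 < β) :
    ((n : ℤ) ^ (β - 1), n ^ β) ∈ powerLayer n :=
  ⟨β - 1, by simp only [Nat.sub_add_cancel hβ]⟩

theorem not_overlap_pow_of_lt {n b c : ℕ} (hn : 1 < n) (hbc : b < c) :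
    ¬ Overlap ((n : ℤ) ^ b, n ^ (b + 1)) ((n : ℤ) ^ c, n ^ (c + 1)) := by
  intro hov
  have hmod : (n : ℤ) ^ b ≡ (n : ℤ) ^ c [ZMOD (n ^ (b + 1) : ℕ)] :=
    hov.modEq_of_dvd dvd_rfl (pow_dvd_pow n (by lia))
  have hdvd : n ^ (b + 1) ∣ n ^ b := by
    exact_mod_cast hmod.dvd_iff.2 (by exact_mod_cast pow_dvd_pow n hbc)
  exact absurd ((Nat.pow_dvd_pow_iff_le_right hn).1 hdvd) b.not_succ_le_self

theorem isGood_powerLayer {n : ℕ} (hn : 1 < n) : IsGood (powerLayer n) := by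
  rintro _ ⟨b, rfl⟩ _ ⟨c, rfl⟩ hne hov
  obtain hbc | rfl | hcb := lt_trichotomy b c
  · exact absurd hov (not_overlap_pow_of_lt hn hbc)
  · exact absurd rfl hne
  · exact absurd hov.symm (not_overlap_pow_of_lt hn hcb)

theorem coprime_of_mem_powerLayer {m n : ℕ} (hmn : m.Coprime n) {c₁ c₂ : ℤ × ℕ}
    (h₁ : c₁ ∈ powerLayer m) (h₂ : c₂ ∈ powerLayer n) : c₁.2.Coprime c₂.2 := by
  obtain ⟨b, rfl⟩ := h₁
  obtain ⟨c, rfl⟩ := h₂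
  exact hmn.pow (b + 1) (c + 1)

theorem one_union_pow_pred_subset_iUnion_powerLayer {ι : Type*} (p α : ι → ℕ) :
    {c : ℤ × ℕ | ∃ i, c = ((1 : ℤ), p i)} ∪
        {c : ℤ × ℕ | ∃ i, ∃ β : ℕ, 2 ≤ β ∧ β ≤ α i ∧ c = ((p i : ℤ) ^ (β - 1), p i ^ β)} ⊆
      ⋃ i, powerLayer (p i) := by
  rintro _ (⟨i, rfl⟩ | ⟨i, β, hβ, -, rfl⟩)
  · exact Set.mem_iUnion_of_mem i (one_mem_powerLayer (p i))
  · exact Set.mem_iUnion_of_mem i (pow_pred_mem_powerLayer (p i) (by lia))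

theorem prime_layer_good_general {ι : Type*} {p : ι → ℕ} (hp : ∀ i, 1 < p i)
    (hcop : Pairwise fun i j ↦ (p i).Coprime (p j)) : IsGood (⋃ i, powerLayer (p i)) :=
  isGood_iUnion (fun i ↦ isGood_powerLayer (hp i)) fun _ _ hij _ h₁ _ h₂ ↦
    coprime_of_mem_powerLayer (hcop hij) h₁ h₂

theorem prime_layer_good (t : ℕ) (p : Fin t → ℕ) (hp : ∀ k, (p k).Prime)
    (hmono : StrictMono p) (α : Fin t → ℕ) (hα : ∀ k, 1 ≤ α k) :
    IsGood ({c : ℤ × ℕ | ∃ i : Fin t, c = ((1 : ℤ), p i)} ∪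
      {c : ℤ × ℕ | ∃ i : Fin t, ∃ β : ℕ, 2 ≤ β ∧ β ≤ α i ∧
        c = ((p i : ℤ) ^ (β - 1), p i ^ β)}) := by
  have hcop : Pairwise fun i j ↦ (p i).Coprime (p j) := fun i j hij ↦
    (Nat.coprime_primes (hp i) (hp j)).2 (hmono.injective.ne hij)
  exact (prime_layer_good_general (fun i ↦ (hp i).one_lt) hcop).mono
    (one_union_pow_pred_subset_iUnion_powerLayer p α)
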